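/- Let R_1, …, R_n (n ≥ 2) be a side-attachment sequence of axis-parallel rectangles. Then the maximal internal line segments of the rectangular tiling (R_1,…,R_n) of U_n = R_1 ∪ ⋯ ∪ R_n are exactly the segments R_j ∩ U_{j-1} for 2 ≤ j ≤ n, where U_{j-1} = R_1 ∪ ⋯ ∪ R_{j-1}. -/

import Mathlib

/-!
Write `U_j = R_0 ∪ ⋯ ∪ R_j` and, for `j ≥ 1`, `s_j = R_j ∩ U_{j-1}`. Since
`U_j = U_{j-1} ∪ R_j` is convex and the interiors are disjoint, a line `{f = b}`, with `f` plus or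
minus a coordinate, cuts `U_j` into `U_{j-1}` and `R_j`. Hence `s_j = U_j ∩ {f = b}` is a segment
whose relative interior lies in the interior of `U_j`.

The relative interior `O` of an internal segment misses the interior of every rectangle. If `O`
lies in the interior of `U_j`, then `f ≤ b` on `O`, and, `f` being affine along the segment, either
`f = b` on `O`, so that `O ⊆ s_j`, or `f < b` on `O`, so that `O` lies in the interior of `U_{j-1}`.
Descending on `j` places every internal segment inside some `s_j`.

If `s_j ⊆ s_k`, a relative interior point of `s_j` is interior to both `U_j` and `U_k`. A point of
`s_k` is not interior to `U_{k-1}`, and likewise for `j`, so `j = k`; thus every `s_j` is maximal.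
-/

open Set

/-- An axis-parallel rectangle `[x1,x2] × [y1,y2]` with `x1 < x2` and `y1 < y2`. -/
structure Rect where
  x1 : ℝ
  x2 : ℝ
  y1 : ℝ
  y2 : ℝ
  hx : x1 < x2
  hy : y1 < y2

namespace Rect

/-- The rectangle as a subset of the plane. -/
def toSet (R : Rect) : Set (ℝ × ℝ) := Set.Icc R.x1 R.x2 ×ˢ Set.Icc R.y1 R.y2

/-- The area of the rectangle. -/
noncomputable def area (R : Rect) : ℝ := (R.x2 - R.x1) * (R.y2 - R.y1)

end Rect

/-- Vertical closed segment `{x} × [c,d]`. -/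
def vseg (x c d : ℝ) : Set (ℝ × ℝ) := ({x} : Set ℝ) ×ˢ Set.Icc c d

/-- Horizontal closed segment `[a,b] × {y}`. -/
def hseg (a b y : ℝ) : Set (ℝ × ℝ) := Set.Icc a b ×ˢ ({y} : Set ℝ)

/-- Relative interior of a vertical segment. -/
def vsegOpen (x c d : ℝ) : Set (ℝ × ℝ) := ({x} : Set ℝ) ×ˢ Set.Ioo c d

/-- Relative interior of a horizontal segment. -/
def hsegOpen (a b y : ℝ) : Set (ℝ × ℝ) := Set.Ioo a b ×ˢ ({y} : Set ℝ)

/-- `S` is one of the four sides of the rectangle `R`. -/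
def Rect.IsSide (R : Rect) (S : Set (ℝ × ℝ)) : Prop :=
  S = vseg R.x1 R.y1 R.y2 ∨ S = vseg R.x2 R.y1 R.y2 ∨
  S = hseg R.x1 R.x2 R.y1 ∨ S = hseg R.x1 R.x2 R.y2

/-- A rectangular tiling: a finite family of axis-parallel rectangles with pairwise
disjoint interiors whose union is an axis-parallel rectangle `F`. -/
structure Tiling (I : Type*) [Fintype I] where
  R : I → Rect
  F : Rect
  disj : Pairwise fun i j => interior ((R i).toSet) ∩ interior ((R j).toSet) = ∅
  union : (⋃ i, (R i).toSet) = F.toSet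

variable {I : Type*} [Fintype I]

/-- An internal line segment of a tiling: a horizontal or vertical closed segment of
positive length contained in the union of the boundaries of the rectangles, whose
relative interior lies in the topological interior of the bounding rectangle. -/
def IsInternalSeg (T : Tiling I) (S : Set (ℝ × ℝ)) : Prop :=
  (∃ x c d : ℝ, c < d ∧ S = vseg x c d ∧
      S ⊆ (⋃ i, frontier ((T.R i).toSet)) ∧ vsegOpen x c d ⊆ interior T.F.toSet) ∨
  (∃ a b y : ℝ, a < b ∧ S = hseg a b y ∧
      S ⊆ (⋃ i, frontier ((T.R i).toSet)) ∧ hsegOpen a b y ⊆ interior T.F.toSet)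

/-- A maximal internal line segment: an internal segment not properly contained in
any other internal segment. -/
def IsMaxInternalSeg (T : Tiling I) (S : Set (ℝ × ℝ)) : Prop :=
  IsInternalSeg T S ∧ ∀ S', IsInternalSeg T S' → S ⊆ S' → S' = S

/-- `A ∩ B` is a vertical segment of positive length with `A` lying to the left of `B`. -/
def LeftAdj (A B : Rect) : Prop :=
  A.x2 = B.x1 ∧ ∃ c d : ℝ, c < d ∧ A.toSet ∩ B.toSet = vseg A.x2 c d

/-- `A ∩ B` is a horizontal segment of positive length with `A` lying below `B`. -/
def BelowAdj (A B : Rect) : Prop :=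
  A.y2 = B.y1 ∧ ∃ a b : ℝ, a < b ∧ A.toSet ∩ B.toSet = hseg a b A.y2

/-- `A` meets the left side of `F` in a segment of positive length. -/
def MeetsLeftSide (A F : Rect) : Prop :=
  ∃ c d : ℝ, c < d ∧ A.toSet ∩ vseg F.x1 F.y1 F.y2 = vseg F.x1 c d

/-- `A` meets the right side of `F` in a segment of positive length. -/
def MeetsRightSide (A F : Rect) : Prop :=
  ∃ c d : ℝ, c < d ∧ A.toSet ∩ vseg F.x2 F.y1 F.y2 = vseg F.x2 c d

/-- `A` meets the bottom side of `F` in a segment of positive length. -/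
def MeetsBottomSide (A F : Rect) : Prop :=
  ∃ a b : ℝ, a < b ∧ A.toSet ∩ hseg F.x1 F.x2 F.y1 = hseg a b F.y1

/-- `A` meets the top side of `F` in a segment of positive length. -/
def MeetsTopSide (A F : Rect) : Prop :=
  ∃ a b : ℝ, a < b ∧ A.toSet ∩ hseg F.x1 F.x2 F.y2 = hseg a b F.y2

/-- Two tilings indexed by the same finite set are weakly equivalent. -/
def WeakEquiv (T T' : Tiling I) : Prop :=
  (∀ i j : I, LeftAdj (T.R i) (T.R j) ↔ LeftAdj (T'.R i) (T'.R j)) ∧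
  (∀ i j : I, BelowAdj (T.R i) (T.R j) ↔ BelowAdj (T'.R i) (T'.R j)) ∧
  (∀ i : I, MeetsLeftSide (T.R i) T.F ↔ MeetsLeftSide (T'.R i) T'.F) ∧
  (∀ i : I, MeetsRightSide (T.R i) T.F ↔ MeetsRightSide (T'.R i) T'.F) ∧
  (∀ i : I, MeetsTopSide (T.R i) T.F ↔ MeetsTopSide (T'.R i) T'.F) ∧
  (∀ i : I, MeetsBottomSide (T.R i) T.F ↔ MeetsBottomSide (T'.R i) T'.F)

/-- A tiling is area-universal if every assignment of positive areas to the rectangles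
is realized by a weakly equivalent tiling. -/
def AreaUniversal (T : Tiling I) : Prop :=
  ∀ w : I → ℝ, (∀ i, 0 < w i) → ∃ T' : Tiling I, WeakEquiv T T' ∧ ∀ i, (T'.R i).area = w i

/-- A tiling is generic if no point belongs to four or more of the rectangles. -/
def Generic (T : Tiling I) : Prop :=
  ∀ p : ℝ × ℝ, ∀ s : Finset I, (∀ i ∈ s, p ∈ (T.R i).toSet) → s.card ≤ 3

/-- A side-attachment sequence: rectangles with pairwise disjoint interiors such that
every partial union `U_j = R_0 ∪ ⋯ ∪ R_j` is an axis-parallel rectangle. -/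
def SideAttachSeq {n : ℕ} (R : Fin n → Rect) : Prop :=
  (Pairwise fun i j => interior ((R i).toSet) ∩ interior ((R j).toSet) = ∅) ∧
  ∀ j : Fin n, ∃ U : Rect, (⋃ i ∈ Set.Iic j, (R i).toSet) = U.toSet

/-! ### Segments and half-spaces -/

section Segment

variable {E : Type*} [AddCommGroup E] [Module ℝ E] {p q : E}

lemma openSegment_nonempty (p q : E) : (openSegment ℝ p q).Nonempty :=
  ⟨_, midpoint_mem_openSegment p q⟩

lemma openSegment_subset_openSegment_of_ne {a b : E} (hpq : p ≠ q)
    (hp : p ∈ segment ℝ a b) (hq : q ∈ segment ℝ a b) :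
    openSegment ℝ p q ⊆ openSegment ℝ a b := by
  rw [segment_eq_image_lineMap] at hp hq
  obtain ⟨s, hs, rfl⟩ := hp
  obtain ⟨t, ht, rfl⟩ := hq
  have hst : s ≠ t := fun h => hpq (by rw [h])
  have h01 : openSegment ℝ s t ⊆ Ioo 0 1 := by
    simpa only [interior_Icc] using (strictConvex_Icc (0 : ℝ) 1).openSegment_subset hs ht hst
  rw [← image_openSegment, openSegment_eq_image_lineMap ℝ a b]
  exact image_mono h01

lemma map_lt_of_mem_openSegment (f : E →ₗ[ℝ] ℝ) {b : ℝ} (hp : f p ≤ b) (hq : f q < b)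
    {x : E} (hx : x ∈ openSegment ℝ p q) : f x < b := by
  obtain ⟨s, t, hs, ht, hst, rfl⟩ := hx
  calc f (s • p + t • q) = s * f p + t * f q := by simp only [map_add, map_smul, smul_eq_mul]
    _ < s * b + t * b :=
      add_lt_add_of_le_of_lt (mul_le_mul_of_nonneg_left hp hs.le) (mul_lt_mul_of_pos_left hq ht)
    _ = b := by rw [← add_mul, hst, one_mul]

lemma forall_le_or_forall_lt_openSegment (f : E →ₗ[ℝ] ℝ) {b : ℝ} (hp : f p ≤ b) (hq : f q ≤ b) :
    (∀ x ∈ openSegment ℝ p q, b ≤ f x) ∨ ∀ x ∈ openSegment ℝ p q, f x < b := by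
  rcases hp.lt_or_eq with hp' | hp'
  · exact .inr fun x hx => map_lt_of_mem_openSegment f hq hp' (openSegment_symm ℝ p q ▸ hx)
  rcases hq.lt_or_eq with hq' | hq'
  · exact .inr fun x hx => map_lt_of_mem_openSegment f hp hq' hx
  · exact .inl fun x hx => (convex_halfSpace_ge f.isLinear b).openSegment_subset hp'.ge hq'.ge hx

end Segment

/-! ### Cutting a set by a hyperplane -/

section Cut

variable {E : Type*} [AddCommGroup E] [Module ℝ E] [TopologicalSpace E]

lemma mem_left_of_map_le_of_mem_union [ContinuousAdd E] [ContinuousSMul ℝ E]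
    {f : E →ₗ[ℝ] ℝ} {b : ℝ} {V R : Set E} {x : E} (hconv : Convex ℝ (V ∪ R)) (hV : IsClosed V)
    (hRge : ∀ r ∈ R, b ≤ f r) (hlt : ∃ v ∈ V, f v < b) (hx : x ∈ V ∪ R) (hxb : f x ≤ b) :
    x ∈ V := by
  obtain ⟨v, hv, hvb⟩ := hlt
  -- Past `x`, the segment to `v` stays strictly below the level `b` and so avoids `R`.
  have hsub : openSegment ℝ x v ⊆ V := fun y hy =>
    (hconv.openSegment_subset hx (.inl hv) hy).resolve_right fun hyR =>
      (map_lt_of_mem_openSegment f hxb hvb hy).not_ge (hRge y hyR)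
  exact closure_minimal hsub hV (segment_subset_closure_openSegment (left_mem_segment ℝ x v))

/-- The hyperplane `{f = b}` cuts `W` into `V`, on the side `f ≤ b`, and `R`, on the side `b ≤ f`.
Both parts contain the points of `W` on the hyperplane. -/
structure IsCut (f : E →L[ℝ] ℝ) (b : ℝ) (V R W : Set E) : Prop where
  mem_below : ∀ x, x ∈ V ↔ x ∈ W ∧ f x ≤ b
  mem_above : ∀ x, x ∈ R ↔ x ∈ W ∧ b ≤ f x

namespace IsCut

variable {f : E →L[ℝ] ℝ} {b : ℝ} {V R W : Set E}

lemma neg (h : IsCut f b V R W) : IsCut (-f) (-b) R V W where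
  mem_below x := by simpa only [neg_apply, neg_le_neg_iff] using h.mem_above x
  mem_above x := by simpa only [neg_apply, neg_le_neg_iff] using h.mem_below x

lemma mem_inter (h : IsCut f b V R W) (x : E) : x ∈ R ∩ V ↔ x ∈ W ∧ f x = b := by
  rw [mem_inter_iff, h.mem_below, h.mem_above, ← and_and_left, eq_comm, le_antisymm_iff]

lemma mem_interior_of_lt (h : IsCut f b V R W) {x : E} (hx : x ∈ interior W) (hlt : f x < b) :
    x ∈ interior V := by
  refine interior_maximal (t := interior W ∩ {y | f y < b}) ?_ ?_ ⟨hx, hlt⟩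
  · exact fun y ⟨hyW, hyb⟩ => (h.mem_below y).mpr ⟨interior_subset hyW, le_of_lt hyb⟩
  · exact isOpen_interior.inter (isOpen_lt f.continuous continuous_const)

lemma mem_interior_of_gt (h : IsCut f b V R W) {x : E} (hx : x ∈ interior W) (hgt : b < f x) :
    x ∈ interior R :=
  h.neg.mem_interior_of_lt hx (neg_lt_neg hgt)

variable [ContinuousAdd E] [ContinuousSMul ℝ E]

lemma openSegment_subset_inter_or_subset_interior (h : IsCut f b V R W) {p q : E}
    (hW : openSegment ℝ p q ⊆ interior W) (hR : Disjoint (openSegment ℝ p q) (interior R)) :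
    openSegment ℝ p q ⊆ R ∩ V ∨ openSegment ℝ p q ⊆ interior V := by
  have hle : ∀ x ∈ openSegment ℝ p q, f x ≤ b := fun x hx =>
    not_lt.mp fun hgt => hR.le_bot ⟨hx, h.mem_interior_of_gt (hW hx) hgt⟩
  have hle_segment : ∀ x ∈ segment ℝ p q, f x ≤ b := fun x hx =>
    closure_minimal hle (isClosed_le f.continuous continuous_const)
      (segment_subset_closure_openSegment hx)
  rcases forall_le_or_forall_lt_openSegment (f : E →ₗ[ℝ] ℝ)
    (hle_segment p (left_mem_segment ℝ p q)) (hle_segment q (right_mem_segment ℝ p q))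
    with hge | hlt
  · exact .inl fun x hx =>
      (h.mem_inter x).mpr ⟨interior_subset (hW hx), (hle x hx).antisymm (hge x hx)⟩
  · exact .inr fun x hx => h.mem_interior_of_lt (hW hx) (hlt x hx)

lemma of_separated (hW : V ∪ R = W) (hconv : Convex ℝ W) (hV : IsClosed V) (hR : IsClosed R)
    (hVle : ∀ v ∈ V, f v ≤ b) (hRge : ∀ r ∈ R, b ≤ f r)
    (hlt : ∃ v ∈ V, f v < b) (hgt : ∃ r ∈ R, b < f r) : IsCut f b V R W := by
  subst hW
  refine ⟨fun x => ⟨fun hx => ⟨.inl hx, hVle x hx⟩, fun ⟨hx, hxb⟩ => ?_⟩,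
    fun x => ⟨fun hx => ⟨.inr hx, hRge x hx⟩, fun ⟨hx, hxb⟩ => ?_⟩⟩
  · exact mem_left_of_map_le_of_mem_union (f := (f : E →ₗ[ℝ] ℝ)) hconv hV hRge hlt hx hxb
  · exact mem_left_of_map_le_of_mem_union (f := -(f : E →ₗ[ℝ] ℝ)) (b := -b)
      (union_comm V R ▸ hconv) hR (fun v hv => neg_le_neg (hVle v hv))
      (hgt.imp fun r hr => hr.imp_right neg_lt_neg) hx.symm (neg_le_neg hxb)

end IsCut

end Cut

/-! ### Axis-parallel segments -/

lemma vseg_eq_segment (x : ℝ) {c d : ℝ} (h : c ≤ d) : vseg x c d = segment ℝ (x, c) (x, d) := by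
  rw [vseg, singleton_prod, ← segment_eq_Icc h, Prod.image_mk_segment_right]

lemma hseg_eq_segment {a b : ℝ} (h : a ≤ b) (y : ℝ) : hseg a b y = segment ℝ (a, y) (b, y) := by
  rw [hseg, prod_singleton, ← segment_eq_Icc h, Prod.image_mk_segment_left]

lemma vsegOpen_eq_openSegment (x : ℝ) {c d : ℝ} (h : c < d) :
    vsegOpen x c d = openSegment ℝ (x, c) (x, d) := by
  rw [vsegOpen, singleton_prod, ← openSegment_eq_Ioo h, Prod.image_mk_openSegment_right]

lemma hsegOpen_eq_openSegment {a b : ℝ} (h : a < b) (y : ℝ) :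
    hsegOpen a b y = openSegment ℝ (a, y) (b, y) := by
  rw [hsegOpen, prod_singleton, ← openSegment_eq_Ioo h, Prod.image_mk_openSegment_left]

/-- `S` is an axis-parallel closed segment of positive length whose relative interior lies in the
interior of `W`. The endpoints are ordered componentwise; the equation between coordinates makes
`S` vertical or horizontal. -/
def IsInnerSeg (W S : Set (ℝ × ℝ)) : Prop :=
  ∃ p q : ℝ × ℝ, p < q ∧ (p.1 = q.1 ∨ p.2 = q.2) ∧
    S = segment ℝ p q ∧ openSegment ℝ p q ⊆ interior W

lemma IsInnerSeg.mono {W W' S : Set (ℝ × ℝ)} (h : IsInnerSeg W S) (hW : W ⊆ W') :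
    IsInnerSeg W' S := by
  obtain ⟨p, q, hlt, hax, hS, hO⟩ := h
  exact ⟨p, q, hlt, hax, hS, hO.trans (interior_mono hW)⟩

lemma isInnerSeg_vseg {W : Set (ℝ × ℝ)} {x c d : ℝ} (h : c < d)
    (hW : vsegOpen x c d ⊆ interior W) : IsInnerSeg W (vseg x c d) :=
  ⟨(x, c), (x, d), Prod.mk_lt_mk_iff_right.mpr h, .inl rfl, vseg_eq_segment x h.le,
    vsegOpen_eq_openSegment x h ▸ hW⟩

lemma isInnerSeg_hseg {W : Set (ℝ × ℝ)} {a b y : ℝ} (h : a < b)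
    (hW : hsegOpen a b y ⊆ interior W) : IsInnerSeg W (hseg a b y) :=
  ⟨(a, y), (b, y), Prod.mk_lt_mk_iff_left.mpr h, .inr rfl, hseg_eq_segment h.le y,
    hsegOpen_eq_openSegment h y ▸ hW⟩

lemma isInternalSeg_iff_isInnerSeg {T : Tiling I} {S : Set (ℝ × ℝ)} :
    IsInternalSeg T S ↔ IsInnerSeg T.F.toSet S ∧ S ⊆ ⋃ i, frontier (T.R i).toSet := by
  constructor
  · rintro (⟨x, c, d, h, rfl, hfr, hO⟩ | ⟨a, b, y, h, rfl, hfr, hO⟩)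
    · exact ⟨isInnerSeg_vseg h hO, hfr⟩
    · exact ⟨isInnerSeg_hseg h hO, hfr⟩
  · rintro ⟨⟨⟨x, c⟩, ⟨x', d⟩, hlt, rfl | rfl, rfl, hO⟩, hfr⟩
    · have h : c < d := Prod.mk_lt_mk_iff_right.mp hlt
      exact .inl ⟨x, c, d, h, (vseg_eq_segment x h.le).symm, hfr,
        (vsegOpen_eq_openSegment x h).trans_subset hO⟩
    · have h : x < x' := Prod.mk_lt_mk_iff_left.mp hlt
      exact .inr ⟨x, x', c, h, (hseg_eq_segment h.le c).symm, hfr,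
        (hsegOpen_eq_openSegment h c).trans_subset hO⟩

/-! ### Rectangles -/

namespace Rect

lemma interior_toSet (R : Rect) : interior R.toSet = Ioo R.x1 R.x2 ×ˢ Ioo R.y1 R.y2 := by
  rw [toSet, interior_prod_eq, interior_Icc, interior_Icc]

lemma closure_interior_toSet (R : Rect) : closure (interior R.toSet) = R.toSet := by
  rw [interior_toSet, closure_prod_eq, closure_Ioo R.hx.ne, closure_Ioo R.hy.ne, toSet]

lemma isClosed_toSet (R : Rect) : IsClosed R.toSet := isClosed_Icc.prod isClosed_Icc

lemma convex_toSet (R : Rect) : Convex ℝ R.toSet := (convex_Icc _ _).prod (convex_Icc _ _)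

lemma lower_left_mem_toSet (R : Rect) : (R.x1, R.y1) ∈ R.toSet :=
  ⟨left_mem_Icc.mpr R.hx.le, left_mem_Icc.mpr R.hy.le⟩

lemma upper_right_mem_toSet (R : Rect) : (R.x2, R.y2) ∈ R.toSet :=
  ⟨right_mem_Icc.mpr R.hx.le, right_mem_Icc.mpr R.hy.le⟩

lemma disjoint_toSet_of_disjoint_interior {R : Rect} {s : Set (ℝ × ℝ)} (hs : IsOpen s)
    (h : Disjoint s (interior R.toSet)) : Disjoint s R.toSet :=
  R.closure_interior_toSet ▸ h.closure_right hs

lemma separated_of_disjoint_interior {V R : Rect}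
    (h : Disjoint (interior V.toSet) (interior R.toSet)) :
    V.x2 ≤ R.x1 ∨ R.x2 ≤ V.x1 ∨ V.y2 ≤ R.y1 ∨ R.y2 ≤ V.y1 := by
  rw [interior_toSet, interior_toSet, disjoint_prod, Ioo_disjoint_Ioo, Ioo_disjoint_Ioo] at h
  have := V.hx
  have := V.hy
  have := R.hx
  have := R.hy
  grind

lemma isInnerSeg_inter_fst_eq (W : Rect) {b : ℝ} (h : b ∈ Ioo W.x1 W.x2) :
    IsInnerSeg W.toSet (W.toSet ∩ {p | p.1 = b}) := by
  have hS : W.toSet ∩ {p | p.1 = b} = vseg b W.y1 W.y2 := by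
    ext ⟨x, y⟩
    constructor
    · exact fun ⟨⟨_, hy⟩, hx⟩ => ⟨hx, hy⟩
    · rintro ⟨rfl, hy⟩
      exact ⟨⟨Ioo_subset_Icc_self h, hy⟩, rfl⟩
  rw [hS]
  refine isInnerSeg_vseg W.hy ?_
  rw [interior_toSet]
  exact prod_mono (singleton_subset_iff.mpr h) subset_rfl

lemma isInnerSeg_inter_snd_eq (W : Rect) {b : ℝ} (h : b ∈ Ioo W.y1 W.y2) :
    IsInnerSeg W.toSet (W.toSet ∩ {p | p.2 = b}) := by
  have hS : W.toSet ∩ {p | p.2 = b} = hseg W.x1 W.x2 b := by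
    ext ⟨x, y⟩
    constructor
    · exact fun ⟨⟨hx, _⟩, hy⟩ => ⟨hx, hy⟩
    · rintro ⟨hx, rfl⟩
      exact ⟨⟨hx, Ioo_subset_Icc_self h⟩, rfl⟩
  rw [hS]
  refine isInnerSeg_hseg W.hx ?_
  rw [interior_toSet]
  exact prod_mono subset_rfl (singleton_subset_iff.mpr h)

variable {V R W : Rect}

lemma isCut_of_x2_le (hW : V.toSet ∪ R.toSet = W.toSet) (h : V.x2 ≤ R.x1) :
    IsCut (.fst ℝ ℝ ℝ) V.x2 V.toSet R.toSet W.toSet :=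
  .of_separated hW W.convex_toSet V.isClosed_toSet R.isClosed_toSet
    (fun _ hp => hp.1.2) (fun _ hp => h.trans hp.1.1)
    ⟨_, V.lower_left_mem_toSet, V.hx⟩ ⟨_, R.upper_right_mem_toSet, h.trans_lt R.hx⟩

lemma isCut_of_y2_le (hW : V.toSet ∪ R.toSet = W.toSet) (h : V.y2 ≤ R.y1) :
    IsCut (.snd ℝ ℝ ℝ) V.y2 V.toSet R.toSet W.toSet :=
  .of_separated hW W.convex_toSet V.isClosed_toSet R.isClosed_toSet
    (fun _ hp => hp.2.2) (fun _ hp => h.trans hp.2.1)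
    ⟨_, V.lower_left_mem_toSet, V.hy⟩ ⟨_, R.upper_right_mem_toSet, h.trans_lt R.hy⟩

lemma isInnerSeg_inter_of_x2_le (hW : V.toSet ∪ R.toSet = W.toSet) (h : V.x2 ≤ R.x1) :
    IsInnerSeg W.toSet (R.toSet ∩ V.toSet) := by
  have hinter : R.toSet ∩ V.toSet = W.toSet ∩ {p | p.1 = V.x2} :=
    ext (isCut_of_x2_le hW h).mem_inter
  have hv : (V.x1, V.y1) ∈ W.toSet := hW.subset (.inl V.lower_left_mem_toSet)
  have hr : (R.x2, R.y2) ∈ W.toSet := hW.subset (.inr R.upper_right_mem_toSet)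
  rw [hinter]
  exact W.isInnerSeg_inter_fst_eq
    ⟨hv.1.1.trans_lt V.hx, (h.trans_lt R.hx).trans_le hr.1.2⟩

lemma isInnerSeg_inter_of_y2_le (hW : V.toSet ∪ R.toSet = W.toSet) (h : V.y2 ≤ R.y1) :
    IsInnerSeg W.toSet (R.toSet ∩ V.toSet) := by
  have hinter : R.toSet ∩ V.toSet = W.toSet ∩ {p | p.2 = V.y2} :=
    ext (isCut_of_y2_le hW h).mem_inter
  have hv : (V.x1, V.y1) ∈ W.toSet := hW.subset (.inl V.lower_left_mem_toSet)
  have hr : (R.x2, R.y2) ∈ W.toSet := hW.subset (.inr R.upper_right_mem_toSet)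
  rw [hinter]
  exact W.isInnerSeg_inter_snd_eq
    ⟨hv.2.1.trans_lt V.hy, (h.trans_lt R.hy).trans_le hr.2.2⟩

lemma exists_isCut (hW : V.toSet ∪ R.toSet = W.toSet)
    (hd : Disjoint (interior V.toSet) (interior R.toSet)) :
    ∃ f b, IsCut f b V.toSet R.toSet W.toSet := by
  have hW' : R.toSet ∪ V.toSet = W.toSet := (union_comm _ _).trans hW
  rcases separated_of_disjoint_interior hd with h | h | h | h
  · exact ⟨_, _, isCut_of_x2_le hW h⟩
  · exact ⟨_, _, (isCut_of_x2_le hW' h).neg⟩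
  · exact ⟨_, _, isCut_of_y2_le hW h⟩
  · exact ⟨_, _, (isCut_of_y2_le hW' h).neg⟩

lemma isInnerSeg_inter (hW : V.toSet ∪ R.toSet = W.toSet)
    (hd : Disjoint (interior V.toSet) (interior R.toSet)) :
    IsInnerSeg W.toSet (R.toSet ∩ V.toSet) := by
  have hW' : R.toSet ∪ V.toSet = W.toSet := (union_comm _ _).trans hW
  rcases separated_of_disjoint_interior hd with h | h | h | h
  · exact isInnerSeg_inter_of_x2_le hW h
  · exact inter_comm _ _ ▸ isInnerSeg_inter_of_x2_le hW' h
  · exact isInnerSeg_inter_of_y2_le hW h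
  · exact inter_comm _ _ ▸ isInnerSeg_inter_of_y2_le hW' h

end Rect

/-! ### Side-attachment sequences -/

lemma Tiling.disjoint_iUnion_frontier_interior (T : Tiling I) (i : I) :
    Disjoint (⋃ k, frontier (T.R k).toSet) (interior (T.R i).toSet) := by
  refine disjoint_iUnion_left.mpr fun k => ?_
  obtain rfl | hki := eq_or_ne k i
  · exact disjoint_interior_frontier.symm
  · have hd : Disjoint (interior (T.R i).toSet) (T.R k).toSet :=
      Rect.disjoint_toSet_of_disjoint_interior isOpen_interior
        (disjoint_iff_inter_eq_empty.mpr (T.disj hki.symm))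
    exact hd.symm.mono_left (T.R k).isClosed_toSet.frontier_subset

section SideAttachSeq

variable {n : ℕ} {R : Fin n → Rect} {j k : Fin n}

/-- The union `U_j = R_0 ∪ ⋯ ∪ R_j`. -/
def unionIic (R : Fin n → Rect) (j : Fin n) : Set (ℝ × ℝ) := ⋃ i ∈ Iic j, (R i).toSet

/-- The union `U_{j-1} = R_0 ∪ ⋯ ∪ R_{j-1}`, which is empty for `j = 0`. -/
def unionIio (R : Fin n → Rect) (j : Fin n) : Set (ℝ × ℝ) := ⋃ i ∈ Iio j, (R i).toSet

/-- The segment `R_j ∩ U_{j-1}` along which `R_j` is attached. -/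
def insertionSeg (R : Fin n → Rect) (j : Fin n) : Set (ℝ × ℝ) := (R j).toSet ∩ unionIio R j

lemma unionIic_eq_unionIio_union (R : Fin n → Rect) (j : Fin n) :
    unionIic R j = unionIio R j ∪ (R j).toSet := by
  rw [unionIic, ← Iio_insert, biUnion_insert, union_comm, unionIio]

lemma unionIic_of_isMin (hj : IsMin j) : unionIic R j = (R j).toSet := by
  rw [unionIic_eq_unionIio_union, unionIio, hj.Iio_eq, biUnion_empty, empty_union]

lemma exists_lt_unionIio_eq_unionIic (R : Fin n → Rect) (hj : ¬IsMin j) :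
    ∃ i < j, unionIio R j = unionIic R i := by
  obtain ⟨i, hij⟩ := exists_covBy_of_wellFoundedGT hj
  exact ⟨i, hij.lt, by rw [unionIio, hij.Iio_eq, unionIic]⟩

lemma unionIic_subset_unionIio (R : Fin n → Rect) (h : j < k) : unionIic R j ⊆ unionIio R k :=
  biUnion_subset_biUnion_left (Iic_subset_Iio.mpr h)

namespace SideAttachSeq

variable (h : SideAttachSeq R)
include h

lemma exists_unionIio_eq_toSet (hj : ¬IsMin j) : ∃ V : Rect, unionIio R j = V.toSet := by
  obtain ⟨i, -, hi⟩ := exists_lt_unionIio_eq_unionIic R hj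
  exact hi ▸ h.2 i

lemma disjoint_unionIio_interior (j : Fin n) :
    Disjoint (unionIio R j) (interior (R j).toSet) := by
  refine disjoint_iUnion₂_left.mpr fun i hij => Disjoint.symm ?_
  exact Rect.disjoint_toSet_of_disjoint_interior isOpen_interior
    (disjoint_iff_inter_eq_empty.mpr (h.1 (ne_of_gt hij)))

lemma disjoint_interior_unionIio_toSet (j : Fin n) :
    Disjoint (interior (unionIio R j)) (R j).toSet :=
  Rect.disjoint_toSet_of_disjoint_interior isOpen_interior
    ((h.disjoint_unionIio_interior j).mono_left interior_subset)

lemma exists_union_eq_toSet (hj : ¬IsMin j) :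
    ∃ V W : Rect, unionIio R j = V.toSet ∧ unionIic R j = W.toSet ∧
      V.toSet ∪ (R j).toSet = W.toSet ∧ Disjoint (interior V.toSet) (interior (R j).toSet) := by
  obtain ⟨V, hV⟩ := h.exists_unionIio_eq_toSet hj
  obtain ⟨W, hW⟩ : ∃ W : Rect, unionIic R j = W.toSet := h.2 j
  refine ⟨V, W, hV, hW, ?_, ?_⟩
  · rw [← hV, ← hW, unionIic_eq_unionIio_union]
  · exact hV ▸ (h.disjoint_unionIio_interior j).mono_left interior_subset

lemma exists_isCut (hj : ¬IsMin j) :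
    ∃ f b, IsCut f b (unionIio R j) (R j).toSet (unionIic R j) := by
  obtain ⟨V, W, hV, hW, hU, hd⟩ := h.exists_union_eq_toSet hj
  rw [hV, hW]
  exact Rect.exists_isCut hU hd

lemma isInnerSeg_insertionSeg (hj : ¬IsMin j) :
    IsInnerSeg (unionIic R j) (insertionSeg R j) := by
  obtain ⟨V, W, hV, hW, hU, hd⟩ := h.exists_union_eq_toSet hj
  rw [insertionSeg, hV, hW]
  exact Rect.isInnerSeg_inter hU hd

lemma isClosed_insertionSeg (hj : ¬IsMin j) : IsClosed (insertionSeg R j) := by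
  obtain ⟨V, hV⟩ := h.exists_unionIio_eq_toSet hj
  exact (R j).isClosed_toSet.inter (hV ▸ V.isClosed_toSet)

lemma insertionSeg_subset_frontier (j : Fin n) : insertionSeg R j ⊆ frontier (R j).toSet :=
  fun _ ⟨hR, hU⟩ =>
    ⟨subset_closure hR, fun hint => (h.disjoint_unionIio_interior j).le_bot ⟨hU, hint⟩⟩

lemma exists_openSegment_subset_insertionSeg {p q : ℝ × ℝ}
    (hR : ∀ i, Disjoint (openSegment ℝ p q) (interior (R i).toSet)) (j : Fin n)
    (hU : openSegment ℝ p q ⊆ interior (unionIic R j)) :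
    ∃ k, ¬IsMin k ∧ openSegment ℝ p q ⊆ insertionSeg R k := by
  induction j using WellFoundedLT.induction with
  | ind j ih =>
    by_cases hj : IsMin j
    · obtain ⟨x, hx⟩ := openSegment_nonempty p q
      exact ((hR j).le_bot ⟨hx, unionIic_of_isMin (R := R) hj ▸ hU hx⟩).elim
    · obtain ⟨f, b, hcut⟩ := h.exists_isCut hj
      rcases hcut.openSegment_subset_inter_or_subset_interior hU (hR j) with hseg | hint
      · exact ⟨j, hj, hseg⟩
      · obtain ⟨i, hij, hi⟩ := exists_lt_unionIio_eq_unionIic R hj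
        exact ih i hij (hi ▸ hint)

lemma notMem_insertionSeg_of_lt (hjk : j < k) {p : ℝ × ℝ}
    (hp : p ∈ interior (unionIic R j)) : p ∉ insertionSeg R k := fun hpk =>
  (h.disjoint_interior_unionIio_toSet k).le_bot
    ⟨interior_mono (unionIic_subset_unionIio R hjk) hp, hpk.1⟩

lemma eq_of_insertionSeg_subset (hj : ¬IsMin j) (hk : ¬IsMin k)
    (hjk : insertionSeg R j ⊆ insertionSeg R k) : j = k := by
  obtain ⟨p, q, hlt, -, hj_eq, hj_int⟩ := h.isInnerSeg_insertionSeg hj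
  obtain ⟨a, b, -, -, hk_eq, hk_int⟩ := h.isInnerSeg_insertionSeg hk
  obtain ⟨x, hx⟩ := openSegment_nonempty p q
  have hxj : x ∈ insertionSeg R j := hj_eq ▸ openSegment_subset_segment ℝ p q hx
  have hends : segment ℝ p q ⊆ segment ℝ a b := hj_eq ▸ hk_eq ▸ hjk
  have hxk : x ∈ openSegment ℝ a b := openSegment_subset_openSegment_of_ne hlt.ne
    (hends (left_mem_segment ℝ p q)) (hends (right_mem_segment ℝ p q)) hx
  rcases lt_trichotomy j k with hlt | heq | hgt
  · exact (h.notMem_insertionSeg_of_lt hlt (hj_int hx) (hjk hxj)).elim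
  · exact heq
  · exact (h.notMem_insertionSeg_of_lt hgt (hk_int hxk) hxj).elim

end SideAttachSeq

end SideAttachSeq

section SideAttachTiling

variable {n : ℕ}

lemma one_le_val_iff_not_isMin (j : Fin n) : 1 ≤ (j : ℕ) ↔ ¬IsMin j := by
  rw [not_isMin_iff]
  exact ⟨fun hj => ⟨⟨0, by omega⟩, hj⟩, fun ⟨i, hi⟩ => Nat.one_le_of_lt hi⟩

lemma unionIic_subset_toSet (T : Tiling (Fin n)) (j : Fin n) : unionIic T.R j ⊆ T.F.toSet :=
  T.union ▸ iUnion₂_subset_iUnion _ _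

lemma exists_unionIic_eq_toSet (T : Tiling (Fin n)) : ∃ j, unionIic T.R j = T.F.toSet := by
  obtain ⟨i, -⟩ := mem_iUnion.mp (T.union.symm ▸ T.F.lower_left_mem_toSet)
  have : Nonempty (Fin n) := ⟨i⟩
  obtain ⟨j, hj⟩ := Finite.exists_max (id : Fin n → Fin n)
  have hIic : Iic j = univ := eq_univ_of_forall hj
  exact ⟨j, by rw [unionIic, hIic, biUnion_univ, T.union]⟩

namespace SideAttachSeq

variable {T : Tiling (Fin n)} (h : SideAttachSeq T.R)
include h

lemma isInternalSeg_insertionSeg {j : Fin n} (hj : ¬IsMin j) :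
    IsInternalSeg T (insertionSeg T.R j) :=
  isInternalSeg_iff_isInnerSeg.mpr
    ⟨(h.isInnerSeg_insertionSeg hj).mono (unionIic_subset_toSet T j),
      (h.insertionSeg_subset_frontier j).trans (subset_iUnion (fun i => frontier (T.R i).toSet) j)⟩

lemma exists_subset_insertionSeg {S : Set (ℝ × ℝ)} (hS : IsInternalSeg T S) :
    ∃ j, ¬IsMin j ∧ S ⊆ insertionSeg T.R j := by
  obtain ⟨⟨p, q, -, -, rfl, hint⟩, hfr⟩ := isInternalSeg_iff_isInnerSeg.mp hS
  obtain ⟨m, hm⟩ := exists_unionIic_eq_toSet T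
  have hd : ∀ i, Disjoint (openSegment ℝ p q) (interior (T.R i).toSet) := fun i =>
    (T.disjoint_iUnion_frontier_interior i).mono_left
      ((openSegment_subset_segment ℝ p q).trans hfr)
  obtain ⟨j, hj, hsub⟩ := h.exists_openSegment_subset_insertionSeg hd m (hm ▸ hint)
  exact ⟨j, hj,
    segment_subset_closure_openSegment.trans (closure_minimal hsub (h.isClosed_insertionSeg hj))⟩

end SideAttachSeq

end SideAttachTiling

/-- For a side-attachment sequence with `n ≥ 2`, the maximal internal
line segments of the resulting tiling are exactly the segments `R_j ∩ U_{j-1}` for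
`2 ≤ j ≤ n` (0-based: `1 ≤ (j : ℕ)`). -/
theorem sideAttachSeq_maxSegs_eq_insertion_segs
    {n : ℕ} (hn : 2 ≤ n) (T : Tiling (Fin n)) (h : SideAttachSeq T.R)
    (S : Set (ℝ × ℝ)) :
    IsMaxInternalSeg T S ↔
      ∃ j : Fin n, 1 ≤ (j : ℕ) ∧
        S = (T.R j).toSet ∩ ⋃ i ∈ Set.Iio j, (T.R i).toSet := by
  simp only [one_le_val_iff_not_isMin]
  change IsMaxInternalSeg T S ↔ ∃ j, ¬IsMin j ∧ S = insertionSeg T.R j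
  constructor
  · rintro ⟨hS, hmax⟩
    obtain ⟨j, hj, hsub⟩ := h.exists_subset_insertionSeg hS
    exact ⟨j, hj, (hmax _ (h.isInternalSeg_insertionSeg hj) hsub).symm⟩
  · rintro ⟨j, hj, rfl⟩
    refine ⟨h.isInternalSeg_insertionSeg hj, fun S' hS' hsub => ?_⟩
    obtain ⟨k, hk, hsub'⟩ := h.exists_subset_insertionSeg hS'
    obtain rfl := h.eq_of_insertionSeg_subset hj hk (hsub.trans hsub')
    exact hsub'.antisymm hsub
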